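/- arXiv:2405.13893 — 2 statements merged into one kernel-verified Lean document; each statement's English description precedes it below -/
import Mathlib

section
/- If G is a connected almost irregular graph of order n ≥ 2, then G contains exactly two vertices of degree ⌊n/2⌋ and exactly one vertex of each degree in {1, ..., n-1} \ {⌊n/2⌋}. -/
/-- The degree of a vertex (as the number of neighbors). -/
noncomputable def ndeg {V : Type*} (G : SimpleGraph V) (v : V) : ℕ :=
  {w | G.Adj v w}.ncard

/-- A graph is almost irregular if there is exactly one unordered pair of distinct
vertices having equal degrees (all other degrees are pairwise distinct and different
from the repeated one). -/
def AlmostIrregular {V : Type*} (G : SimpleGraph V) : Prop :=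
  ∃ u v : V, u ≠ v ∧ ndeg G u = ndeg G v ∧
    ∀ x y : V, x ≠ y → ndeg G x = ndeg G y → ((x = u ∧ y = v) ∨ (x = v ∧ y = u))

/-- Abstract core: degrees off `v` biject to `1..n-1`, so `deg v = n/2`. -/
theorem core_deg {V : Type*} [Fintype V] [DecidableEq V] (G : SimpleGraph V)
    [DecidableRel G.Adj] (n : ℕ) (hn : n = Fintype.card V) (v : V)
    (hpos : ∀ x, 1 ≤ G.degree x)
    (hcard : ∀ a, 1 ≤ a → a ≤ n →
      (Finset.univ.filter (fun y => y ≠ v ∧ a ≤ G.degree y)).card = n - a) :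
    G.degree v = n / 2 := by
  have hlt : ∀ x, G.degree x < n := fun x => hn ▸ G.degree_lt_card_verts x
  have key : ∀ k, (1 ≤ k → 2 * k ≤ n → ∀ x, x ≠ v → G.degree x = n - k →
        ∀ y, y ≠ x → (y = v ∨ k ≤ G.degree y) → G.Adj x y) ∧
      (1 ≤ k → 2 * k < n → ∀ x, x ≠ v → G.degree x = k →
        ∀ y, G.Adj x y → y ≠ v ∧ n - k ≤ G.degree y) := by
    intro k
    induction k using Nat.strong_induction_on with
    | _ k ih =>
      have ha : (1 ≤ k → 2 * k ≤ n → ∀ x, x ≠ v → G.degree x = n - k →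
        ∀ y, y ≠ x → (y = v ∨ k ≤ G.degree y) → G.Adj x y) := by
        intro hk hkn x hx hdx y hyx hy
        set S := insert v ((Finset.univ.filter
          (fun y => y ≠ v ∧ k ≤ G.degree y)).erase x) with hS
        have hsub : G.neighborFinset x ⊆ S := by
          intro z hz
          rw [SimpleGraph.mem_neighborFinset] at hz
          simp only [hS, Finset.mem_insert, Finset.mem_erase, Finset.mem_filter,
            Finset.mem_univ, true_and]
          by_cases hzv : z = v
          · exact Or.inl hzv
          · refine Or.inr ⟨hz.ne', hzv, ?_⟩
            by_contra hlt'
            push Not at hlt'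
            have := ((ih _ hlt').2 (hpos z) (by omega) z hzv rfl x hz.symm).2
            have := hpos z
            omega
        have hSc : S.card = n - k := by
          rw [hS, Finset.card_insert_of_notMem (by simp), Finset.card_erase_of_mem
            (by simp [hx]; omega), hcard k hk (by omega)]
          omega
        have heq := Finset.eq_of_subset_of_card_le hsub
          (by rw [hSc, SimpleGraph.card_neighborFinset_eq_degree, hdx])
        rw [← SimpleGraph.mem_neighborFinset, heq]
        simp only [hS, Finset.mem_insert, Finset.mem_erase, Finset.mem_filter,
            Finset.mem_univ, true_and]
        tauto
      refine ⟨ha, ?_⟩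
      intro hk hkn x hx hdx y hxy
      have hsub : (Finset.univ.filter (fun y => y ≠ v ∧ n - k ≤ G.degree y))
          ⊆ G.neighborFinset x := by
        intro z hz
        simp only [Finset.mem_filter, Finset.mem_univ, true_and] at hz
        obtain ⟨hzv, hdz⟩ := hz
        have hz1 := hlt z
        have hxz : x ≠ z := by rintro rfl; omega
        rw [SimpleGraph.mem_neighborFinset]
        refine SimpleGraph.Adj.symm ?_
        by_cases hjk : n - G.degree z = k
        · exact ha hk (by omega) z hzv (by omega) x hxz (Or.inr (by omega))
        · exact (ih (n - G.degree z) (by omega)).1 (by omega) (by omega) z hzv (by omega) x hxz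
            (Or.inr (by omega))
      have heq := Finset.eq_of_subset_of_card_le hsub
          (by rw [hcard _ (by omega) (by omega), SimpleGraph.card_neighborFinset_eq_degree, hdx]
              omega)
      rw [← SimpleGraph.mem_neighborFinset, ← heq] at hxy
      simpa using hxy
  have hv := hlt v
  have hv' := hpos v
  have hN : G.neighborFinset v =
      Finset.univ.filter (fun y => y ≠ v ∧ n - n / 2 ≤ G.degree y) := by
    ext y
    simp only [SimpleGraph.mem_neighborFinset, Finset.mem_filter, Finset.mem_univ, true_and]
    have := hlt y
    constructor
    · intro h
      refine ⟨h.ne', ?_⟩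
      by_contra hc
      exact ((key (G.degree y)).2 (hpos y) (by omega) y h.ne' rfl v h.symm).1 rfl
    · rintro ⟨hy, hd⟩
      exact ((key (n - G.degree y)).1 (by omega) (by omega) y hy (by omega) v hy.symm
        (Or.inl rfl)).symm
  rw [← SimpleGraph.card_neighborFinset_eq_degree, hN, hcard _ (by omega) (by omega)]
  omega

theorem connected_almost_irregular_degrees {V : Type*} [Fintype V] (G : SimpleGraph V)
    (hn : 2 ≤ Fintype.card V) (hconn : G.Connected) (hai : AlmostIrregular G) :
    {v : V | ndeg G v = Fintype.card V / 2}.ncard = 2 ∧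
      ∀ d : ℕ, 1 ≤ d → d ≤ Fintype.card V - 1 → d ≠ Fintype.card V / 2 →
        {v : V | ndeg G v = d}.ncard = 1 := by
  classical
  have hnd : ∀ x, ndeg G x = G.degree x := by
    intro x
    rw [ndeg, Set.ncard_eq_toFinset_card', ← SimpleGraph.card_neighborFinset_eq_degree]
    congr 1
  obtain ⟨u, v, huv, hd, huniq⟩ := hai
  simp only [hnd] at *
  have : Nontrivial V := ⟨u, v, huv⟩
  have hpos : ∀ x, 1 ≤ G.degree x := fun x => hconn.preconnected.degree_pos_of_nontrivial x
  have hlt : ∀ x, G.degree x < Fintype.card V := fun x => G.degree_lt_card_verts x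
  have hinj : Set.InjOn (fun x => G.degree x) (Finset.univ.erase v : Finset V) := by
    intro x hx y hy hxy
    by_contra hne
    simp at hx hy
    rcases huniq x y hne hxy with h | h
    · exact hy h.2
    · exact hx h.1
  have himg : (Finset.univ.erase v).image (fun x => G.degree x)
      = Finset.Icc 1 (Fintype.card V - 1) := by
    apply Finset.eq_of_subset_of_card_le
    · intro d hd
      obtain ⟨x, -, rfl⟩ := Finset.mem_image.1 hd
      have := hpos x
      have := hlt x
      simp only [Finset.mem_Icc]
      omega
    · rw [Finset.card_image_of_injOn hinj, Finset.card_erase_of_mem (Finset.mem_univ _)]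
      simp
  have hsurj : ∀ d, 1 ≤ d → d ≤ Fintype.card V - 1 → ∃ x, x ≠ v ∧ G.degree x = d := by
    intro d h1 h2
    have : d ∈ (Finset.univ.erase v).image (fun x => G.degree x) := by
      rw [himg]; exact Finset.mem_Icc.2 ⟨h1, h2⟩
    obtain ⟨x, hx, rfl⟩ := Finset.mem_image.1 this
    exact ⟨x, by simpa using hx, rfl⟩
  have hdv : G.degree v = Fintype.card V / 2 := by
    apply core_deg G _ rfl v hpos
    intro a ha han
    rw [← Finset.card_image_of_injOn (f := fun x => G.degree x)
      (hinj.mono (by intro x hx; simp at hx ⊢; exact hx.1))]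
    have : (Finset.univ.filter (fun y => y ≠ v ∧ a ≤ G.degree y)).image (fun x => G.degree x)
        = Finset.Icc a (Fintype.card V - 1) := by
      ext d
      simp only [Finset.mem_image, Finset.mem_filter, Finset.mem_univ, true_and, Finset.mem_Icc]
      constructor
      · rintro ⟨x, ⟨_, h⟩, rfl⟩
        have := hlt x
        omega
      · rintro ⟨h1, h2⟩
        obtain ⟨x, hx, rfl⟩ := hsurj d (by omega) h2
        exact ⟨x, ⟨hx, h1⟩, rfl⟩
    rw [this, Nat.card_Icc]
    omega
  constructor
  · rw [Set.ncard_eq_two]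
    refine ⟨u, v, huv, ?_⟩
    ext x
    simp only [Set.mem_setOf_eq, Set.mem_insert_iff, Set.mem_singleton_iff]
    constructor
    · intro hx
      by_cases hxv : x = v
      · exact Or.inr hxv
      · rcases huniq x v hxv (hx.trans hdv.symm) with h | h
        · exact Or.inl h.1
        · exact Or.inr h.1
    · rintro (rfl | rfl)
      · exact hd.trans hdv
      · exact hdv
  · intro d h1 h2 h3
    obtain ⟨x, hx, hxd⟩ := hsurj d h1 h2
    rw [Set.ncard_eq_one]
    refine ⟨x, ?_⟩
    ext y
    simp only [Set.mem_setOf_eq, Set.mem_singleton_iff]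
    constructor
    · intro hy
      by_contra hne
      rcases huniq y x hne (hy.trans hxd.symm) with h | h
      · exact hx h.2
      · rw [h.1] at hy
        omega
    · rintro rfl
      exact hxd
end

section
/- For every n ≥ 2 there are, up to isomorphism, exactly two almost irregular graphs of order n: there exist almost irregular graphs G₁ and G₂ on n vertices with G₁ connected and G₂ disconnected, G₁ not isomorphic to G₂, and every almost irregular graph of order n is isomorphic to G₁ or to G₂. -/
/-- The set of degrees is exactly `{1, ..., |V| - 1}`. -/
def FullDeg {V : Type*} [Fintype V] (G : SimpleGraph V) : Prop :=
  ∀ d : ℕ, (∃ x, ndeg G x = d) ↔ (1 ≤ d ∧ d < Fintype.card V)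

lemma ndeg_compl {V : Type*} [Fintype V] (G : SimpleGraph V) (x : V) :
    ndeg Gᶜ x + ndeg G x + 1 = Fintype.card V := by
  classical
  have h : ({w | Gᶜ.Adj x w} : Set V) = ({w | G.Adj x w} ∪ {x})ᶜ := by
    ext w
    simp only [SimpleGraph.compl_adj, Set.mem_ofPred_eq, Set.mem_compl_iff, Set.mem_union,
      Set.mem_singleton_iff]
    grind
  have h2 : (({w | G.Adj x w} ∪ {x} : Set V)).ncard = ndeg G x + 1 := by
    rw [Set.ncard_union_eq (by simp) (Set.toFinite _) (Set.toFinite _)]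
    simp [ndeg]
  have h3 := Set.ncard_add_ncard_compl ({w | G.Adj x w} ∪ {x} : Set V)
  rw [← h, h2, Nat.card_eq_fintype_card] at h3
  unfold ndeg at *
  omega

lemma ndeg_lt {V : Type*} [Fintype V] (G : SimpleGraph V) (x : V) :
    ndeg G x < Fintype.card V := by
  have := ndeg_compl G x
  omega

lemma ndeg_zero {V : Type*} [Fintype V] {G : SimpleGraph V} {x : V} (h : ndeg G x = 0) (y : V) :
    ¬ G.Adj x y := by
  unfold ndeg at h
  rw [Set.ncard_eq_zero (Set.toFinite _)] at h
  intro hy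
  have : y ∈ ({w | G.Adj x w} : Set V) := hy
  rw [h] at this
  exact this

lemma ndeg_top {V : Type*} [Fintype V] {G : SimpleGraph V} {x : V}
    (h : ndeg G x + 1 = Fintype.card V) {y : V} (hy : x ≠ y) : G.Adj x y := by
  have h1 := ndeg_compl G x
  have h2 := ndeg_zero (G := Gᶜ) (x := x) (by omega) y
  simp only [SimpleGraph.compl_adj] at h2
  by_contra h3
  exact h2 ⟨hy, h3⟩

lemma ai_compl {V : Type*} [Fintype V] {G : SimpleGraph V} (h : AlmostIrregular G) :
    AlmostIrregular Gᶜ := by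
  obtain ⟨u, v, huv, he, hall⟩ := h
  refine ⟨u, v, huv, ?_, fun x y hxy hd => hall x y hxy ?_⟩
  · have := ndeg_compl G u
    have := ndeg_compl G v
    omega
  · have := ndeg_compl G x
    have := ndeg_compl G y
    omega

lemma full_ai {V : Type*} [Fintype V] [Nonempty V] {G : SimpleGraph V} (h : FullDeg G) :
    AlmostIrregular G := by
  classical
  have hpos : 0 < Fintype.card V := Fintype.card_pos
  have him : (Finset.univ.image (ndeg G)) = Finset.Ico 1 (Fintype.card V) := by
    ext d
    have := h d
    simpa using this
  have hc : (Finset.univ.image (ndeg G)).card = Fintype.card V - 1 := by simp [him]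
  have hni : ¬ Function.Injective (ndeg G) := by
    intro hi
    rw [Finset.card_image_of_injective _ hi, Finset.card_univ] at hc
    omega
  simp only [Function.Injective, not_forall] at hni
  obtain ⟨u, v, he, huv⟩ := hni
  have him2 : ((Finset.univ.erase u).image (ndeg G)) = Finset.univ.image (ndeg G) := by
    ext d
    simp only [Finset.mem_image, Finset.mem_erase, Finset.mem_univ, and_true, true_and]
    constructor
    · rintro ⟨x, _, hx⟩
      exact ⟨x, hx⟩
    · rintro ⟨x, hx⟩
      by_cases hxu : x = u
      · exact ⟨v, fun h => huv h.symm, by rw [← he, ← hxu, hx]⟩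
      · exact ⟨x, hxu, hx⟩
  have hinj : Set.InjOn (ndeg G) (Finset.univ.erase u : Finset V) := by
    apply Finset.injOn_of_card_image_eq
    rw [him2, hc, Finset.card_erase_of_mem (Finset.mem_univ u), Finset.card_univ]
  have key : ∀ x y, x ≠ u → y ≠ u → ndeg G x = ndeg G y → x = y := by
    intro x y hx hy hxy
    exact hinj (by simpa using hx) (by simpa using hy) hxy
  refine ⟨u, v, huv, he, fun x y hxy hd => ?_⟩
  by_cases hx : x = u
  · left
    refine ⟨hx, key y v (by rintro rfl; exact hxy hx) (Ne.symm huv) ?_⟩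
    rw [← hd, hx, he]
  · by_cases hy : y = u
    · right
      refine ⟨key x v hx (Ne.symm huv) ?_, hy⟩
      rw [hd, hy, he]
    · exact absurd (key x y hx hy hd) hxy

lemma ai_full {V : Type*} [Fintype V] {G : SimpleGraph V} (hV : 2 ≤ Fintype.card V)
    (h : AlmostIrregular G) : FullDeg G ∨ FullDeg Gᶜ := by
  classical
  obtain ⟨u, v, huv, he, hall⟩ := h
  set n := Fintype.card V with hn
  have hinj : Set.InjOn (ndeg G) (Finset.univ.erase u : Finset V) := by
    intro x hx y hy hxy
    by_contra hne
    have hx' : x ≠ u := by simpa using hx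
    have hy' : y ≠ u := by simpa using hy
    rcases hall x y hne hxy with ⟨a, _⟩ | ⟨_, a⟩
    · exact hx' a
    · exact hy' a
  set S := (Finset.univ.erase u).image (ndeg G) with hS
  have hSc : S.card = n - 1 := by
    rw [hS, Finset.card_image_of_injOn hinj, Finset.card_erase_of_mem (Finset.mem_univ u),
      Finset.card_univ]
  have hSsub : S ⊆ Finset.range n := by
    intro d hd
    simp only [hS, Finset.mem_image] at hd
    obtain ⟨x, _, rfl⟩ := hd
    simpa using ndeg_lt G x
  have hmem : ∀ d, (∃ x, ndeg G x = d) ↔ d ∈ S := by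
    intro d
    simp only [hS, Finset.mem_image, Finset.mem_erase, Finset.mem_univ, and_true]
    constructor
    · rintro ⟨x, hx⟩
      by_cases hxu : x = u
      · exact ⟨v, fun h => huv h.symm, by rw [← he, ← hxu, hx]⟩
      · exact ⟨x, hxu, hx⟩
    · rintro ⟨x, _, hx⟩
      exact ⟨x, hx⟩
  have hone : (Finset.range n \ S).card = 1 := by
    rw [Finset.card_sdiff_of_subset hSsub, hSc, Finset.card_range]
    omega
  obtain ⟨m, hm⟩ := Finset.card_eq_one.mp hone
  have hmS : ∀ d, d ∈ S ↔ (d < n ∧ d ≠ m) := by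
    intro d
    have h1 : d ∈ Finset.range n \ S ↔ d = m := by rw [hm]; simp
    have h2 := @hSsub d
    simp only [Finset.mem_sdiff, Finset.mem_range] at h1 h2
    tauto
  have hmn : m < n := by
    have : m ∈ Finset.range n \ S := by rw [hm]; simp
    simp only [Finset.mem_sdiff, Finset.mem_range] at this
    exact this.1
  by_cases h0 : m = 0
  · left
    intro d
    rw [hmem, hmS]
    omega
  by_cases h1 : m = n - 1
  · right
    intro d
    constructor
    · rintro ⟨x, hx⟩
      have := ndeg_compl G x
      have h3 := (hmS _).1 ((hmem _).1 ⟨x, rfl⟩)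
      omega
    · intro hd
      obtain ⟨x, hx⟩ := (hmem (n - 1 - d)).2 ((hmS _).2 (by omega))
      have := ndeg_compl G x
      exact ⟨x, by omega⟩
  · exfalso
    obtain ⟨x, hx⟩ := (hmem 0).2 ((hmS _).2 (by omega))
    obtain ⟨y, hy⟩ := (hmem (n - 1)).2 ((hmS _).2 (by omega))
    have hxy : y ≠ x := by
      rintro rfl
      omega
    exact ndeg_zero hx y (ndeg_top (by omega) hxy).symm

lemma ndeg_induce {V : Type*} [Fintype V] {G : SimpleGraph V} {v : V}
    (hv : ∀ y, v ≠ y → G.Adj v y) (x : {x : V // x ≠ v}) :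
    ndeg (G.comap (Subtype.val : {x : V // x ≠ v} → V)) x + 1 = ndeg G x := by
  classical
  unfold ndeg
  have h : ({w | G.Adj x w} : Set V) =
      insert v (Subtype.val '' {w | (G.comap (Subtype.val : {x : V // x ≠ v} → V)).Adj x w}) := by
    ext w
    have := hv x x.2.symm
    simp only [Set.mem_ofPred_eq, Set.mem_insert_iff, Set.mem_image, SimpleGraph.comap_adj,
      Subtype.exists, exists_and_left, exists_prop]
    constructor
    · intro hw
      by_cases hwv : w = v
      · exact Or.inl hwv
      · exact Or.inr ⟨w, hw, hwv, rfl⟩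
    · rintro (rfl | ⟨a, ha, _, rfl⟩)
      · exact this.symm
      · exact ha
  rw [h, Set.ncard_insert_of_notMem (by simp) (Set.toFinite _),
    Set.ncard_image_of_injective _ Subtype.val_injective]

lemma full_reduce {V : Type*} [Fintype V] [DecidableEq V] {G : SimpleGraph V}
    (hV : 3 ≤ Fintype.card V) (h : FullDeg G) : ∃ v, (∀ y, v ≠ y → G.Adj v y) ∧
      FullDeg (G.comap (Subtype.val : {x : V // x ≠ v} → V))ᶜ := by
  obtain ⟨v, hv⟩ := (h (Fintype.card V - 1)).2 (by omega)
  have hv' : ∀ y, v ≠ y → G.Adj v y := fun y hy => ndeg_top (by omega) hy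
  obtain ⟨z, hz⟩ := (h 1).2 (by omega)
  have hc : Fintype.card {x : V // x ≠ v} = Fintype.card V - 1 := by
    simp [Fintype.card_subtype_compl]
  have huniq : ∀ x, x ≠ v → ndeg G x + 1 ≠ Fintype.card V := by
    intro x hx hd
    have hzx : z ≠ x := by rintro rfl; omega
    have hzv : z ≠ v := by rintro rfl; omega
    have h1 := ndeg_top hd hzx.symm
    have h2 := hv' z hzv.symm
    have h3 : ({x, v} : Set V) ⊆ {w | G.Adj z w} := by
      rintro w (rfl | rfl)
      · exact h1.symm
      · exact h2.symm
    have h4 := Set.ncard_le_ncard h3 (Set.toFinite _)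
    rw [Set.ncard_pair hx] at h4
    unfold ndeg at hz
    omega
  refine ⟨v, hv', fun d => ?_⟩
  rw [hc]
  constructor
  · rintro ⟨x, hx⟩
    have h1 := ndeg_compl (G.comap (Subtype.val : {x : V // x ≠ v} → V)) x
    have h2 := ndeg_induce hv' x
    have h3 := huniq x x.2
    have h4 := (h _).1 ⟨x.1, rfl⟩
    omega
  · intro hd
    obtain ⟨x, hx⟩ := (h (Fintype.card V - 1 - d)).2 (by omega)
    have hxv : x ≠ v := by rintro rfl; omega
    have h1 := ndeg_compl (G.comap (Subtype.val : {x : V // x ≠ v} → V)) ⟨x, hxv⟩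
    have h2 := ndeg_induce hv' ⟨x, hxv⟩
    simp only at h2
    exact ⟨⟨x, hxv⟩, by omega⟩

lemma full_unique (n : ℕ) (hn : 2 ≤ n) : ∀ (V W : Type) [Fintype V] [Fintype W]
    (G : SimpleGraph V) (H : SimpleGraph W), Fintype.card V = n → Fintype.card W = n →
    FullDeg G → FullDeg H → Nonempty (G ≃g H) := by
  classical
  induction n, hn using Nat.le_induction with
  | base =>
    intro V W _ _ G H hV hW hG hH
    let e := Fintype.equivOfCardEq (hV.trans hW.symm)
    refine ⟨⟨e, ?_⟩⟩
    have hg : ∀ x y, x ≠ y → G.Adj x y := by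
      intro x y hxy
      have := (hG _).1 ⟨x, rfl⟩
      exact ndeg_top (by omega) hxy
    have hh : ∀ x y, x ≠ y → H.Adj x y := by
      intro x y hxy
      have := (hH _).1 ⟨x, rfl⟩
      exact ndeg_top (by omega) hxy
    intro a b
    constructor
    · intro hab
      exact hg a b (fun h => hab.ne (by rw [h]))
    · intro hab
      exact hh _ _ (fun h => hab.ne (e.injective h))
  | succ n hn ih =>
    intro V W _ _ G H hV hW hG hH
    obtain ⟨v, hv, hGv⟩ := full_reduce (by omega) hG
    obtain ⟨w, hw, hHw⟩ := full_reduce (by omega) hH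
    obtain ⟨f⟩ := ih _ _ _ _ (by simp [Fintype.card_subtype_compl, hV])
      (by simp [Fintype.card_subtype_compl, hW]) hGv hHw
    have hf : ∀ a b, H.Adj (f a).1 (f b).1 ↔ G.Adj a.1 b.1 := by
      intro a b
      have h1 := f.map_adj_iff (v := a) (w := b)
      simp only [SimpleGraph.compl_adj, SimpleGraph.comap_adj, ne_eq,
        EmbeddingLike.apply_eq_iff_eq] at h1
      by_cases hab : a = b
      · subst hab; simp
      · tauto
    let F : V → W := fun x => if h : x = v then w else (f ⟨x, h⟩).1
    have hFv : F v = w := by simp [F]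
    have hFn : ∀ x (h : x ≠ v), F x = (f ⟨x, h⟩).1 := by
      intro x h
      simp [F, h]
    have hinj : Function.Injective F := by
      intro x y hxy
      by_cases hx : x = v
      · by_cases hy : y = v
        · rw [hx, hy]
        · rw [hx, hFv, hFn y hy] at hxy
          exact absurd hxy.symm (f ⟨y, hy⟩).2
      · by_cases hy : y = v
        · rw [hy, hFv, hFn x hx] at hxy
          exact absurd hxy (f ⟨x, hx⟩).2
        · rw [hFn x hx, hFn y hy] at hxy
          have := f.injective (Subtype.ext hxy)
          simpa using this
    have hbij : Function.Bijective F :=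
      (Fintype.bijective_iff_injective_and_card F).2 ⟨hinj, hV.trans hW.symm⟩
    refine ⟨⟨Equiv.ofBijective F hbij, ?_⟩⟩
    intro x y
    change H.Adj (F x) (F y) ↔ G.Adj x y
    by_cases hx : x = v
    · by_cases hy : y = v
      · subst hx; subst hy; simp
      · subst hx
        rw [hFv, hFn y hy]
        exact iff_of_true (hw _ (f ⟨y, hy⟩).2.symm) (hv _ (Ne.symm hy))
    · by_cases hy : y = v
      · subst hy
        rw [hFv, hFn x hx]
        exact iff_of_true (hw _ (f ⟨x, hx⟩).2.symm).symm (hv _ (Ne.symm hx)).symm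
      · rw [hFn x hx, hFn y hy]
        exact hf _ _

/-- The connected almost irregular graph. -/
def thrGraph (n : ℕ) : SimpleGraph (Fin n) where
  Adj i j := i ≠ j ∧ n ≤ i.1 + j.1 + 1
  symm := ⟨fun i j h => ⟨h.1.symm, by have := h.2; omega⟩⟩
  loopless := ⟨fun i h => h.1 rfl⟩

lemma thr_ndeg (n : ℕ) (i : Fin n) :
    ndeg (thrGraph n) i = if n ≤ 2 * i.1 + 1 then i.1 else i.1 + 1 := by
  classical
  have hi := i.2
  have hA : (Finset.Ici (⟨n - 1 - i.1, by omega⟩ : Fin n)).card = i.1 + 1 := by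
    rw [Fin.card_Ici]
    simp only
    omega
  have h : ({w | (thrGraph n).Adj i w} : Set (Fin n)) =
      ((Finset.Ici (⟨n - 1 - i.1, by omega⟩ : Fin n)).erase i : Finset (Fin n)) := by
    ext w
    simp only [thrGraph, Set.mem_ofPred_eq, Finset.coe_erase, Finset.coe_Ici, Set.mem_sdiff,
      Set.mem_Ici, Set.mem_singleton_iff, Fin.le_def, ne_eq]
    constructor
    · rintro ⟨h1, h2⟩
      exact ⟨by omega, fun h => h1 h.symm⟩
    · rintro ⟨h1, h2⟩
      exact ⟨fun h => h2 h.symm, by omega⟩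
  unfold ndeg
  rw [h, Set.ncard_coe_finset, Finset.card_erase_eq_ite, hA]
  simp only [Finset.mem_Ici, Fin.le_def]
  split_ifs <;> omega

lemma thr_full (n : ℕ) (hn : 2 ≤ n) : FullDeg (thrGraph n) := by
  intro d
  rw [Fintype.card_fin]
  constructor
  · rintro ⟨x, hx⟩
    rw [thr_ndeg] at hx
    have := x.2
    split_ifs at hx <;> omega
  · intro hd
    by_cases h : n ≤ 2 * d + 1
    · exact ⟨⟨d, hd.2⟩, by rw [thr_ndeg]; simp [h]⟩
    · refine ⟨⟨d - 1, by omega⟩, ?_⟩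
      rw [thr_ndeg]
      simp only
      split_ifs <;> omega

/-- Up to isomorphism there are exactly two almost irregular graphs of each order
`n ≥ 2`: one connected and one disconnected. -/
theorem almost_irregular_two_graphs (n : ℕ) (hn : 2 ≤ n) :
    ∃ G₁ G₂ : SimpleGraph (Fin n),
      AlmostIrregular G₁ ∧ AlmostIrregular G₂ ∧
      G₁.Connected ∧ ¬ G₂.Connected ∧
      IsEmpty (G₁ ≃g G₂) ∧
      ∀ (V : Type) [Fintype V] (G : SimpleGraph V), Fintype.card V = n →
        AlmostIrregular G → (Nonempty (G ≃g G₁) ∨ Nonempty (G ≃g G₂)) := by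
  have : Nonempty (Fin n) := ⟨⟨0, by omega⟩⟩
  have hfull := thr_full n hn
  have hadj : ∀ y, (⟨n - 1, by omega⟩ : Fin n) ≠ y → (thrGraph n).Adj ⟨n - 1, by omega⟩ y := by
    intro y hy
    exact ⟨hy, by simp only; omega⟩
  have hconn : (thrGraph n).Connected := by
    rw [SimpleGraph.connected_iff_exists_forall_reachable]
    refine ⟨⟨n - 1, by omega⟩, fun y => ?_⟩
    by_cases hy : (⟨n - 1, by omega⟩ : Fin n) = y
    · rw [← hy]
    · exact (hadj y hy).reachable
  have hdis : ¬ (thrGraph n)ᶜ.Connected := by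
    intro hc
    have : Nontrivial (Fin n) := Fin.nontrivial_iff_two_le.2 hn
    obtain ⟨w, hw⟩ := hc.preconnected.exists_adj_of_nontrivial ⟨n - 1, by omega⟩
    rw [SimpleGraph.compl_adj] at hw
    exact hw.2 (hadj w hw.1)
  refine ⟨thrGraph n, (thrGraph n)ᶜ, full_ai hfull, ai_compl (full_ai hfull), hconn, hdis,
    ⟨fun e => hdis (e.connected_iff.1 hconn)⟩, ?_⟩
  intro V _ G hV hG
  rcases ai_full (by omega) hG with h | h
  · exact Or.inl (full_unique n hn V (Fin n) G _ hV (by simp) h hfull)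
  · right
    obtain ⟨e⟩ := full_unique n hn V (Fin n) Gᶜ _ hV (by simp) h hfull
    refine ⟨⟨e.toEquiv, ?_⟩⟩
    intro a b
    have h1 := e.map_adj_iff (v := a) (w := b)
    have h2 : e a = e b ↔ a = b := e.injective.eq_iff
    change (thrGraph n)ᶜ.Adj (e a) (e b) ↔ G.Adj a b
    rw [SimpleGraph.compl_adj, h1, SimpleGraph.compl_adj, ne_eq, h2]
    by_cases hab : a = b
    · subst hab; simp
    · tauto
end
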